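/- Let h : ℝⁿ → ℝ be L-smooth and σ-hypoconvex, 0 < γ < 1/[σ]₋. Then the Moreau envelope h^γ(s) := min_w { h(w) + (1/(2γ))‖w-s‖² } is continuously differentiable with ∇h^γ(s) = (1/γ)(s - prox_{γh}(s)), is max{L/(1+γL), [σ]₋/(1+γσ)}-smooth, and is (σ/(1+γσ))-hypoconvex. -/

import Mathlib

open Set Filter

section helpers
variable {E : Type*} [NormedAddCommGroup E] [InnerProductSpace ℝ E]

theorem aux_half (h : E → ℝ) (g : E → E) (L σ : ℝ)
    (hlow : ∀ x y, h x + inner ℝ (g x) (y - x) + σ / 2 * ‖y - x‖ ^ 2 ≤ h y)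
    (hup : ∀ x y, h y ≤ h x + inner ℝ (g x) (y - x) + L / 2 * ‖y - x‖ ^ 2)
    (x y : E) (t : ℝ) :
    (t - (L - σ) / 2 * t ^ 2) * ‖g y - g x - σ • (y - x)‖ ^ 2 ≤
      h y - h x - inner ℝ (g x) (y - x) - σ / 2 * ‖y - x‖ ^ 2 := by
  obtain ⟨e, he⟩ : ∃ e, e = y - x := ⟨_, rfl⟩
  obtain ⟨r, hr⟩ : ∃ r, r = g y - g x - σ • (y - x) := ⟨_, rfl⟩
  have h1 := hlow x (y - t • r)
  have h2 := hup y (y - t • r)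
  have e1 : y - t • r - x = e - t • r := by rw [he]; abel
  have e2 : y - t • r - y = -(t • r) := by abel
  rw [e1] at h1
  rw [e2] at h2
  rw [← hr, ← he]
  rw [← he] at hr
  have hrr : ‖r‖ ^ 2 = inner ℝ (g y) r - inner ℝ (g x) r - σ * inner ℝ e r := by
    have h0 : inner ℝ r r = inner ℝ (g y - g x - σ • e) r := by rw [← hr]
    rw [← real_inner_self_eq_norm_sq, h0, inner_sub_left, inner_sub_left, inner_smul_left]
    simp
  rw [norm_sub_sq_real, norm_smul, mul_pow, inner_sub_right, inner_smul_right,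
    inner_smul_right, Real.norm_eq_abs, sq_abs] at h1
  rw [norm_neg, norm_smul, mul_pow, inner_neg_right, inner_smul_right,
    Real.norm_eq_abs, sq_abs] at h2
  have h3 : t * ‖r‖ ^ 2 = t * (inner ℝ (g y) r - inner ℝ (g x) r - σ * inner ℝ e r) := by
    rw [← hrr]
  linarith

theorem aux_coco (h : E → ℝ) (g : E → E) (L σ : ℝ) (hσ : σ ≤ L)
    (hlow : ∀ x y, h x + inner ℝ (g x) (y - x) + σ / 2 * ‖y - x‖ ^ 2 ≤ h y)
    (hup : ∀ x y, h y ≤ h x + inner ℝ (g x) (y - x) + L / 2 * ‖y - x‖ ^ 2)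
    (x y : E) :
    0 ≤ inner ℝ (g y - g x - σ • (y - x)) (L • (y - x) - (g y - g x)) := by
  have key : ∀ t : ℝ, (2 * t - (L - σ) * t ^ 2) * ‖g y - g x - σ • (y - x)‖ ^ 2 ≤
      inner ℝ (g y - g x - σ • (y - x)) (y - x) := by
    intro t
    have h1 := aux_half h g L σ hlow hup x y t
    have h2 := aux_half h g L σ hlow hup y x t
    have e1 : g x - g y - σ • (x - y) = -(g y - g x - σ • (y - x)) := by module
    rw [e1, norm_neg, norm_sub_rev x y, ← neg_sub y x, inner_neg_right] at h2
    rw [inner_sub_left, inner_sub_left, inner_smul_left, real_inner_self_eq_norm_sq]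
    simp only [conj_trivial]
    linarith
  obtain ⟨r, hr⟩ : ∃ r, r = g y - g x - σ • (y - x) := ⟨_, rfl⟩
  have e2 : L • (y - x) - (g y - g x) = (L - σ) • (y - x) - r := by rw [hr]; module
  rw [e2, ← hr, inner_sub_right, inner_smul_right, real_inner_self_eq_norm_sq]
  rw [← hr] at key
  rcases hσ.lt_or_eq with hlt | heq
  · have hM : 0 < L - σ := sub_pos.2 hlt
    have := key (1 / (L - σ))
    have e3 : 2 * (1 / (L - σ)) - (L - σ) * (1 / (L - σ)) ^ 2 = 1 / (L - σ) := by
      field_simp; ring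
    rw [e3] at this
    have h4 := mul_le_mul_of_nonneg_left this hM.le
    rw [← mul_assoc, mul_one_div_cancel hM.ne', one_mul] at h4
    linarith
  · subst heq
    simp only [sub_self, zero_mul, zero_sub, sub_zero] at key ⊢
    by_contra hc
    have hpos : 0 < ‖r‖ ^ 2 := by linarith
    have := key ((inner ℝ r (y - x) + 1) / (2 * ‖r‖ ^ 2))
    have e3 : 2 * ((inner ℝ r (y - x) + 1) / (2 * ‖r‖ ^ 2)) * ‖r‖ ^ 2
      = inner ℝ r (y - x) + 1 := by
      generalize ‖r‖ ^ 2 = q at hpos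
      field_simp
    linarith

theorem aux_line (h : E → ℝ) [CompleteSpace E] (g : E → E) (hg : ∀ x, HasGradientAt h (g x) x)
    (x d : E) (t : ℝ) :
    HasDerivAt (fun t : ℝ => h (x + t • d)) (inner ℝ (g (x + t • d)) d) t := by
  have h1 : HasDerivAt (fun t : ℝ => x + t • d) d t := by
    simpa using ((hasDerivAt_id t).smul_const d).const_add x
  have h2 := (hg (x + t • d)).hasFDerivAt.comp_hasDerivAt t h1
  convert! h2 using 1

theorem aux_up [CompleteSpace E] (h : E → ℝ) (g : E → E) (hg : ∀ x, HasGradientAt h (g x) x)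
    (L : ℝ) (hLip : ∀ x y, ‖g x - g y‖ ≤ L * ‖x - y‖) (x y : E) :
    h y ≤ h x + inner ℝ (g x) (y - x) + L / 2 * ‖y - x‖ ^ 2 := by
  obtain ⟨d, hd⟩ : ∃ d, d = y - x := ⟨_, rfl⟩
  have hD : ∀ t : ℝ, HasDerivAt
      (fun t : ℝ => h (x + t • d) - t * inner ℝ (g x) d - L / 2 * ‖d‖ ^ 2 * t ^ 2)
      (inner ℝ (g (x + t • d)) d - inner ℝ (g x) d - L / 2 * ‖d‖ ^ 2 * (2 * t)) t := by
    intro t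
    have h2 := ((aux_line h g hg x d t).sub ((hasDerivAt_id t).mul_const (inner ℝ (g x) d))).sub
      ((hasDerivAt_pow 2 t).const_mul (L / 2 * ‖d‖ ^ 2))
    convert! h2 using 1
    simp
  have hanti := antitoneOn_of_deriv_nonpos (convex_Icc (0:ℝ) 1)
    (fun t _ => (hD t).continuousAt.continuousWithinAt)
    (fun t _ => (hD t).differentiableAt.differentiableWithinAt)
    (by
      intro t ht
      rw [interior_Icc] at ht
      rw [(hD t).deriv, ← inner_sub_left]
      have h3 := real_inner_le_norm (g (x + t • d) - g x) d
      have h4 := hLip (x + t • d) x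
      rw [add_sub_cancel_left, norm_smul, Real.norm_eq_abs, abs_of_pos ht.1] at h4
      have h5 := mul_le_mul_of_nonneg_right h4 (norm_nonneg d)
      nlinarith)
  have := hanti (left_mem_Icc.2 zero_le_one) (right_mem_Icc.2 zero_le_one) zero_le_one
  simp only [zero_smul, one_smul, add_zero] at this
  rw [hd] at this
  rw [add_sub_cancel] at this
  linarith

theorem aux_low [CompleteSpace E] (h : E → ℝ) (g : E → E) (hg : ∀ x, HasGradientAt h (g x) x)
    (σ : ℝ) (hhyp : ConvexOn ℝ Set.univ (fun x => h x - σ / 2 * ‖x‖ ^ 2)) (x y : E) :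
    h x + inner ℝ (g x) (y - x) + σ / 2 * ‖y - x‖ ^ 2 ≤ h y := by
  obtain ⟨d, hd⟩ : ∃ d, d = y - x := ⟨_, rfl⟩
  have hy : y = x + d := by rw [hd]; abel
  have hc := hhyp.comp_affineMap (AffineMap.lineMap x y : ℝ →ᵃ[ℝ] E)
  have hfun : ((fun x => h x - σ / 2 * ‖x‖ ^ 2) ∘ (AffineMap.lineMap x y : ℝ →ᵃ[ℝ] E))
      = fun t : ℝ => h (x + t • d) - σ / 2 * (‖x‖ ^ 2 + 2 * t * inner ℝ x d + t ^ 2 * ‖d‖ ^ 2) := by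
    funext t
    have : (AffineMap.lineMap x y : ℝ →ᵃ[ℝ] E) t = x + t • d := by
      rw [AffineMap.lineMap_apply, vsub_eq_sub, vadd_eq_add, hd, add_comm]
    simp only [Function.comp, this]
    rw [norm_add_sq_real, inner_smul_right, norm_smul, mul_pow, Real.norm_eq_abs, sq_abs]
    ring
  rw [hfun] at hc
  have hD : HasDerivAt (fun t : ℝ => h (x + t • d) -
      σ / 2 * (‖x‖ ^ 2 + 2 * t * inner ℝ x d + t ^ 2 * ‖d‖ ^ 2))
      (inner ℝ (g x) d - σ * inner ℝ x d) 0 := by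
    have h2 := (aux_line h g hg x d 0).sub
      ((((((hasDerivAt_id (0:ℝ)).const_mul 2).mul_const (inner ℝ x d)).const_add (‖x‖ ^ 2)).add
        ((hasDerivAt_pow 2 (0:ℝ)).mul_const (‖d‖ ^ 2))).const_mul (σ / 2))
    convert! h2 using 1
    simp
    ring
  have := hc.le_slope_of_hasDerivAt (mem_univ 0) (mem_univ 1) zero_lt_one hD
  rw [slope_def_field] at this
  simp only [zero_smul, one_smul, add_zero] at this
  rw [← hd, hy]
  linarith

end helpers

/-- For `h` `L`-smooth and `σ`-hypoconvex and `0 < γ < 1/[σ]₋`, the Moreau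
envelope `h^γ` is continuously differentiable with `∇h^γ(s) = (1/γ)(s - prox_{γh}(s))`, is
`max{L/(1+γL), [σ]₋/(1+γσ)}`-smooth, and is `(σ/(1+γσ))`-hypoconvex. -/
theorem moreau_envelope_smooth {n : ℕ}
    (h : EuclideanSpace ℝ (Fin n) → ℝ) (L σ γ : ℝ) (hσ : σ ∈ Set.Icc (-L) L)
    (hC1 : ContDiff ℝ 1 h)
    (hLip : ∀ x y, ‖gradient h x - gradient h y‖ ≤ L * ‖x - y‖)
    (hhyp : ConvexOn ℝ Set.univ (fun x => h x - σ / 2 * ‖x‖ ^ 2))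
    (hγ0 : 0 < γ) (hγ : γ * max 0 (-σ) < 1)
    (p : EuclideanSpace ℝ (Fin n) → EuclideanSpace ℝ (Fin n))
    (hp : ∀ s, IsMinOn (fun w => h w + 1 / (2 * γ) * ‖w - s‖ ^ 2) Set.univ (p s)) :
    ContDiff ℝ 1 (fun s => h (p s) + 1 / (2 * γ) * ‖p s - s‖ ^ 2) ∧
    (∀ s, HasGradientAt (fun s => h (p s) + 1 / (2 * γ) * ‖p s - s‖ ^ 2)
      ((1 / γ) • (s - p s)) s) ∧
    (∀ s s', ‖gradient (fun s => h (p s) + 1 / (2 * γ) * ‖p s - s‖ ^ 2) s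
        - gradient (fun s => h (p s) + 1 / (2 * γ) * ‖p s - s‖ ^ 2) s'‖
      ≤ max (L / (1 + γ * L)) (max 0 (-σ) / (1 + γ * σ)) * ‖s - s'‖) ∧
    ConvexOn ℝ Set.univ (fun s =>
      (h (p s) + 1 / (2 * γ) * ‖p s - s‖ ^ 2) - (σ / (1 + γ * σ)) / 2 * ‖s‖ ^ 2) := by
  have hc : 0 < 1 + γ * σ := by
    have := mul_le_mul_of_nonneg_left (le_max_right 0 (-σ)) hγ0.le
    linarith
  have hL : 0 ≤ L := by linarith [hσ.1, hσ.2]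
  have hcL : 0 < 1 + γ * L := by positivity
  have hg : ∀ x, HasGradientAt h (gradient h x) x := fun x =>
    (hC1.differentiable (by norm_num) x).hasGradientAt
  obtain ⟨g, hgdef⟩ : ∃ g, g = gradient h := ⟨_, rfl⟩
  rw [← hgdef] at hg hLip
  have hlow := aux_low h g hg σ hhyp
  have hup := aux_up h g hg L hLip
  have hmin : ∀ s w, h (p s) + 1 / (2 * γ) * ‖p s - s‖ ^ 2 ≤ h w + 1 / (2 * γ) * ‖w - s‖ ^ 2 :=
    fun s w => hp s (mem_univ w)
  -- first-order condition
  have hfoc : ∀ s, g (p s) = (1 / γ) • (s - p s) := by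
    intro s
    have h1 : HasFDerivAt (fun w => h w + 1 / (2 * γ) * ‖w - s‖ ^ 2) _ (p s) :=
      (hg (p s)).hasFDerivAt.add
        (((hasFDerivAt_id (p s)).sub_const s).norm_sq.const_mul (1 / (2 * γ)))
    have h2 := ((hp s).isLocalMin Filter.univ_mem).hasFDerivAt_eq_zero h1
    refine ext_inner_right ℝ fun v => ?_
    have h3 := DFunLike.congr_fun h2 v
    simp [← inner_sub_left] at h3
    rw [inner_smul_left, ← neg_sub (p s) s, inner_neg_left]
    simp only [conj_trivial, one_div]
    have h4 : γ⁻¹ * 2⁻¹ * (2 * inner ℝ (p s - s) v) = γ⁻¹ * inner ℝ (p s - s) v := by ring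
    linarith
  obtain ⟨K, hK⟩ : ∃ K, K = max (L / (1 + γ * L)) (max 0 (-σ) / (1 + γ * σ)) := ⟨_, rfl⟩
  have hK0 : 0 ≤ K := by rw [hK]; exact le_max_of_le_left (by positivity)
  have hLipV : ∀ s s', ‖(1 / γ) • (s - p s) - (1 / γ) • (s' - p s')‖ ≤ K * ‖s - s'‖ := by
    intro s s'
    have hco := aux_coco h g L σ hσ.2 hlow hup (p s') (p s)
    obtain ⟨v, hv⟩ : ∃ v, v = (1 / γ) • (s - p s) - (1 / γ) • (s' - p s') := ⟨_, rfl⟩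
    obtain ⟨u, hu⟩ : ∃ u, u = s - s' := ⟨_, rfl⟩
    have hd : p s - p s' = u - γ • v := by
      rw [hv, hu, smul_sub, smul_smul, smul_smul, mul_one_div_cancel hγ0.ne']
      module
    rw [hfoc, hfoc, ← hv, hd] at hco
    rw [← hv, ← hu]
    have e1 : v - σ • (u - γ • v) = (1 + γ * σ) • (v - (σ / (1 + γ * σ)) • u) := by
      rw [smul_sub (1 + γ * σ), smul_smul (1 + γ * σ), mul_div_cancel₀ _ hc.ne']; module
    have e2 : L • (u - γ • v) - v = (1 + γ * L) • ((L / (1 + γ * L)) • u - v) := by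
      rw [smul_sub (1 + γ * L), smul_smul (1 + γ * L), mul_div_cancel₀ _ hcL.ne']; module
    rw [e1, e2, inner_smul_left, inner_smul_right] at hco
    simp only [conj_trivial] at hco
    have hco2 := nonneg_of_mul_nonneg_right (nonneg_of_mul_nonneg_right hco hc) hcL
    obtain ⟨a, ha⟩ : ∃ a, a = σ / (1 + γ * σ) := ⟨_, rfl⟩
    obtain ⟨b, hb⟩ : ∃ b, b = L / (1 + γ * L) := ⟨_, rfl⟩
    rw [← ha, ← hb] at hco2
    have hbK : b ≤ K := by rw [hb, hK]; exact le_max_left _ _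
    have haK : -a ≤ K := by
      rw [ha, hK, ← neg_div]
      exact le_max_of_le_right (div_le_div_of_nonneg_right (le_max_right _ _) hc.le)
    have hab : a ≤ b := by
      rw [ha, hb, div_le_div_iff₀ hc hcL]; linarith [hσ.2]
    have hexp : ‖v‖ ^ 2 ≤ (a + b) * inner ℝ u v - a * b * ‖u‖ ^ 2 := by
      rw [inner_sub_right, inner_sub_left, inner_sub_left, inner_smul_left, inner_smul_right,
        inner_smul_right, inner_smul_left, real_inner_self_eq_norm_sq,
        real_inner_self_eq_norm_sq, real_inner_comm] at hco2
      simp only [conj_trivial] at hco2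
      linarith
    -- |v - m u| ≤ r |u|
    have h1 : ‖v - ((a + b) / 2) • u‖ ≤ (b - a) / 2 * ‖u‖ := by
      refine le_of_sq_le_sq ?_ (mul_nonneg (by linarith) (norm_nonneg _))
      rw [norm_sub_sq_real, inner_smul_right, norm_smul, mul_pow, Real.norm_eq_abs, sq_abs,
        real_inner_comm]
      nlinarith
    have h2 : ‖v‖ ≤ ‖v - ((a + b) / 2) • u‖ + ‖((a + b) / 2) • u‖ := by
      simpa using norm_add_le (v - ((a + b) / 2) • u) (((a + b) / 2) • u)
    rw [norm_smul, Real.norm_eq_abs] at h2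
    have h3 : (b - a) / 2 + |(a + b) / 2| ≤ K := by
      rcases abs_cases ((a + b) / 2) with h | h <;> linarith
    have h4 := mul_le_mul_of_nonneg_right h3 (norm_nonneg u)
    linarith
  have hgrad : ∀ s, HasGradientAt (fun s => h (p s) + 1 / (2 * γ) * ‖p s - s‖ ^ 2)
      ((1 / γ) • (s - p s)) s := by
    have hub : ∀ s s', h (p s') + 1 / (2 * γ) * ‖p s' - s'‖ ^ 2
        - (h (p s) + 1 / (2 * γ) * ‖p s - s‖ ^ 2) ≤
        inner ℝ ((1 / γ) • (s - p s)) (s' - s) + 1 / (2 * γ) * ‖s' - s‖ ^ 2 := by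
      intro s s'
      have h1 := hmin s' (p s)
      have h2 : ‖p s - s'‖ ^ 2 = ‖p s - s‖ ^ 2 + 2 * inner ℝ (s - p s) (s' - s)
          + ‖s' - s‖ ^ 2 := by
        have : p s - s' = (p s - s) - (s' - s) := by abel
        rw [this, norm_sub_sq_real, ← neg_sub s (p s), inner_neg_left, norm_neg]
        ring
      rw [h2] at h1
      rw [inner_smul_left]
      simp only [conj_trivial]
      have h3 : 1 / (2 * γ) * (‖p s - s‖ ^ 2 + 2 * inner ℝ (s - p s) (s' - s) + ‖s' - s‖ ^ 2)
        = 1 / (2 * γ) * ‖p s - s‖ ^ 2 + 1 / γ * inner ℝ (s - p s) (s' - s)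
          + 1 / (2 * γ) * ‖s' - s‖ ^ 2 := by
        field_simp
      linarith
    intro s
    rw [hasGradientAt_iff_isLittleO]
    have hO : (fun s' => (h (p s') + 1 / (2 * γ) * ‖p s' - s'‖ ^ 2)
        - (h (p s) + 1 / (2 * γ) * ‖p s - s‖ ^ 2) - inner ℝ ((1 / γ) • (s - p s)) (s' - s))
        =O[nhds s] fun s' => ‖s' - s‖ ^ 2 := by
      refine Asymptotics.IsBigO.of_bound (K + 1 / (2 * γ)) (Eventually.of_forall fun s' => ?_)
      rw [Real.norm_eq_abs, Real.norm_eq_abs, abs_of_nonneg (sq_nonneg ‖s' - s‖), abs_le]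
      have h1 := hub s s'
      have h2 := hub s' s
      rw [← neg_sub s' s, inner_neg_right, norm_neg] at h2
      have h3 := hLipV s' s
      have h4 := abs_le.1 (abs_real_inner_le_norm
        ((1 / γ) • (s' - p s') - (1 / γ) • (s - p s)) (s' - s))
      rw [inner_sub_left] at h4
      have h5 := mul_le_mul_of_nonneg_right h3 (norm_nonneg (s' - s))
      have h6 : 0 ≤ K * ‖s' - s‖ ^ 2 := by positivity
      have h7 : K * ‖s' - s‖ * ‖s' - s‖ = K * ‖s' - s‖ ^ 2 := by ring
      constructor <;> nlinarith [h4.1, h4.2]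
    refine hO.trans_isLittleO ?_
    exact Asymptotics.isLittleO_pow_sub_sub s one_lt_two
  refine ⟨?_, hgrad, ?_, ?_⟩
  · rw [contDiff_one_iff_hasFDerivAt]
    refine ⟨fun s => InnerProductSpace.toDual ℝ _ ((1 / γ) • (s - p s)), ?_,
      fun s => (hgrad s).hasFDerivAt⟩
    refine (InnerProductSpace.toDual ℝ _).continuous.comp ?_
    refine LipschitzWith.continuous (K := K.toNNReal) (LipschitzWith.of_dist_le_mul fun s s' => ?_)
    rw [dist_eq_norm, dist_eq_norm, Real.coe_toNNReal _ hK0]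
    exact hLipV s s'
  · intro s s'
    rw [(hgrad s).gradient, (hgrad s').gradient, ← hK]
    exact hLipV s s'
  · refine ⟨convex_univ, fun s _ s' _ α β hα hβ hαβ => ?_⟩
    have hid : ∀ w z : EuclideanSpace ℝ (Fin n),
        h w + 1 / (2 * γ) * ‖w - z‖ ^ 2 - (σ / (1 + γ * σ)) / 2 * ‖z‖ ^ 2
        = (h w - σ / 2 * ‖w‖ ^ 2)
          + 1 / (2 * γ * (1 + γ * σ)) * ‖(1 + γ * σ) • w - z‖ ^ 2 := by
      intro w z
      rw [norm_sub_sq_real, norm_sub_sq_real, inner_smul_left, norm_smul, mul_pow,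
        Real.norm_eq_abs, sq_abs]
      simp only [conj_trivial]
      field_simp
      ring
    have h1 := hmin (α • s + β • s') (α • p s + β • p s')
    have h2 := hid (α • p s + β • p s') (α • s + β • s')
    have h3 := hhyp.2 (mem_univ (p s)) (mem_univ (p s')) hα hβ hαβ
    have hsq : ConvexOn ℝ Set.univ (fun x : EuclideanSpace ℝ (Fin n) => ‖x‖ ^ 2) :=
      convexOn_univ_norm.pow (fun _ _ => norm_nonneg _) 2
    have h4 := hsq.2 (mem_univ ((1 + γ * σ) • p s - s)) (mem_univ ((1 + γ * σ) • p s' - s'))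
      hα hβ hαβ
    have e4 : α • ((1 + γ * σ) • p s - s) + β • ((1 + γ * σ) • p s' - s')
      = (1 + γ * σ) • (α • p s + β • p s') - (α • s + β • s') := by module
    rw [e4] at h4
    have h5 := mul_le_mul_of_nonneg_left h4
      (show 0 ≤ 1 / (2 * γ * (1 + γ * σ)) by positivity)
    have h6 := hid (p s) s
    have h7 := hid (p s') s'
    simp only [smul_eq_mul] at h3 h5 ⊢
    rw [h6, h7]
    linarith
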